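/- Suppose each A(w) ∈ L(𝒵_ℂ,𝒵_ℂ) is invertible with w ↦ A(w)^{-1} analytic on V+iν and ‖A(w)^{-1}‖_ν ≤ K/2; ρ : V+iν → 𝒵_ℂ is analytic; R : (V+iν)×(S+iσ) → 𝒵_ℂ is analytic, quadratic in z (R(w,0) = 0 and ∂_z R(w,0) = 0 for all w), with ‖R‖_{ν,σ} ≤ C_R. Assume 0 < κ ≤ σ − Kδ where δ := ‖ρ‖_ν satisfies δ < κ² K^{-2} C_R^{-1}. Then there exists an analytic map ζ : V+iν → 𝒵_ℂ such that for every w ∈ V+iν, z = ζ(w) solves the equation 0 = ρ(w) + A(w)z + R(w,z), satisfies ‖ζ(w)‖ ≤ K ‖ρ(w)‖, and is the unique solution in the closed ball of radius (K/2)‖ρ(w)‖ centered at −A(w)^{-1}ρ(w). -/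

import Mathlib

open Metric

/-!
Solving `ρ + A z + R(z) = 0` amounts to finding a fixed point of `F z = -A⁻¹(ρ + R(z))`. Since `R`
is bounded by `C` on the ball of radius `σ` and vanishes to second order at `0`, the Schwarz lemma
gives `‖R(z)‖ ≤ C (‖z‖ / σ) ^ 2`, so the nonlinear part of `F` satisfies `‖A⁻¹ R(z)‖ ≤ ‖z‖ / 2` on
a ball of radius `τ` with `K * C * τ ≤ σ ^ 2`. If moreover `K * δ < τ`, then `F` maps this ball
strictly inside itself, uniformly in `w`.

The smallness assumption need not make `F` a contraction for the norm: in a general Banach space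
Cauchy's estimates for the derivative of `R` lose a factor. The Earle–Hamilton argument replaces
them. If `F` maps a bounded set `U` strictly inside itself, then so does the map obtained by
stretching `F` by a fixed factor `1 + η` about one of its values. Stretching at each step, the
derivative of `F^[n]` times `(1 + η) ^ n` is the derivative of a self-map of `U`, hence bounded by
Cauchy's estimate. So the iterates contract geometrically, at a rate independent of `w`, and the
fixed point is a uniform limit of functions analytic in `w`.
-/

open Set Filter Topology Function

section Erosion

variable {E : Type*} [SeminormedAddCommGroup E] {U V : Set E} {r s : ℝ} {x : E}

/-- The erosion of `U` by `r`: the points at distance at least `r` from the complement of `U`.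
Mapping `U` into `erosion r U` for some `0 < r` is the hypothesis of the Earle–Hamilton theorem. -/
def erosion (r : ℝ) (U : Set E) : Set E := {x | ball x r ⊆ U}

lemma erosion_subset (hr : 0 < r) : erosion r U ⊆ U := fun _ hx ↦ hx (mem_ball_self hr)

lemma erosion_mono (h : U ⊆ V) : erosion r U ⊆ erosion r V := fun _ hx ↦ Subset.trans hx h

lemma closedBall_subset_erosion_ball : closedBall x r ⊆ erosion s (ball x (r + s)) :=
  fun _ hy ↦ ball_subset_ball' (by linarith [mem_closedBall.1 hy])

lemma erosion_eq_iInter_preimage : erosion r U = ⋂ v ∈ ball (0 : E) r, (· + v) ⁻¹' U := by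
  ext x
  simp only [mem_iInter, mem_preimage]
  refine ⟨fun hx v hv ↦ hx (by simpa using hv), fun hx y hy ↦ ?_⟩
  simpa using hx (y - x) (by simpa [dist_eq_norm] using hy)

lemma isClosed_erosion : IsClosed (erosion r U) := by
  have : (erosion r U)ᶜ = thickening r Uᶜ := by
    ext x
    simp only [erosion, mem_compl_iff, mem_ofPred_eq, not_subset, mem_thickening_iff, mem_ball']
    exact exists_congr fun y ↦ and_comm
  exact isOpen_compl_iff.1 (this ▸ isOpen_thickening)

lemma convex_erosion [NormedSpace ℝ E] (hU : Convex ℝ U) : Convex ℝ (erosion r U) := by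
  rw [erosion_eq_iInter_preimage]
  exact convex_iInter₂ fun v _ ↦ hU.translate_preimage_left v

end Erosion

section CauchyEstimate

variable {E F : Type*} [NormedAddCommGroup E] [NormedSpace ℂ E]
  [NormedAddCommGroup F] [NormedSpace ℂ F] {U : Set E} {r C : ℝ} {x : E} {f : E → F}

lemma norm_fderiv_le_div_of_mem_erosion (hr : 0 < r) (hf : DifferentiableOn ℂ f U)
    (hx : x ∈ erosion r U) (hC : ∀ y ∈ U, dist (f y) (f x) ≤ C) : ‖fderiv ℂ f x‖ ≤ C / r :=
  Complex.norm_fderiv_le_div_of_mapsTo_ball (hf.mono hx) (fun _ hy ↦ hC _ (hx hy)) hr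

variable {ι : Type*} {φ : Filter ι} {u : ι → E → F}

lemma uniformCauchySeqOn_fderiv_erosion (hr : 0 < r) (hU : IsOpen U)
    (hu : ∀ n, DifferentiableOn ℂ (u n) U) (hcauchy : UniformCauchySeqOn u φ U) :
    UniformCauchySeqOn (fun n ↦ fderiv ℂ (u n)) φ (erosion r U) := by
  intro S hS
  obtain ⟨ε, hε, hεS⟩ := mem_uniformity_dist.1 hS
  filter_upwards [hcauchy _ (dist_mem_uniformity (show 0 < ε * r / 4 by positivity))] with p hp x hx
  have hdiff (n) : DifferentiableAt ℂ (u n) x :=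
    (hu n).differentiableAt (hU.mem_nhds (erosion_subset hr hx))
  have hsmall (y) (hy : y ∈ U) : ‖(u p.1 - u p.2) y‖ ≤ ε * r / 4 := by
    simpa only [Pi.sub_apply, dist_eq_norm] using (hp y hy).le
  apply hεS
  calc dist (fderiv ℂ (u p.1) x) (fderiv ℂ (u p.2) x)
      = ‖fderiv ℂ (u p.1 - u p.2) x‖ := by rw [fderiv_sub (hdiff _) (hdiff _), dist_eq_norm]
    _ ≤ ε * r / 2 / r := by
        refine norm_fderiv_le_div_of_mem_erosion hr ((hu _).sub (hu _)) hx fun y hy ↦ ?_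
        linarith [dist_le_norm_add_norm ((u p.1 - u p.2) y) ((u p.1 - u p.2) x), hsmall y hy,
          hsmall x (erosion_subset hr hx)]
    _ < ε := by field_simp; norm_num

lemma differentiableOn_of_tendstoUniformlyOn [CompleteSpace F] [φ.NeBot] {g : E → F}
    (hU : IsOpen U) (hu : ∀ n, DifferentiableOn ℂ (u n) U) (hug : TendstoUniformlyOn u g φ U) :
    DifferentiableOn ℂ g U := by
  intro x hx
  obtain ⟨r, hr, hrU⟩ := Metric.isOpen_iff.1 hU x hx
  have hball : ball x (r / 2) ⊆ erosion (r / 2) U :=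
    (ball_subset_closedBall.trans closedBall_subset_erosion_ball).trans
      (erosion_mono (by rwa [add_halves]))
  have hballU : ball x (r / 2) ⊆ U := hball.trans (erosion_subset (half_pos hr))
  have hcauchy : UniformCauchySeqOn (fun n ↦ fderiv ℂ (u n)) φ (ball x (r / 2)) :=
    (uniformCauchySeqOn_fderiv_erosion (half_pos hr) hU hu hug.uniformCauchySeqOn).mono hball
  choose! g' hg' using fun y (hy : y ∈ ball x (r / 2)) ↦
    CompleteSpace.complete (hcauchy.cauchy_map hy)
  exact (hasFDerivAt_of_tendstoUniformlyOn isOpen_ball (hcauchy.tendstoUniformlyOn_of_tendsto hg')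
    (fun n y hy ↦ ((hu n).differentiableAt (hU.mem_nhds (hballU hy))).hasFDerivAt)
    (fun y hy ↦ hug.tendsto_at (hballU hy))
    (mem_ball_self (half_pos hr))).differentiableAt.differentiableWithinAt

lemma dist_le_mul_div_sq_of_fderiv_eq_zero {R₁ R₂ : ℝ} {c z : E}
    (hf : DifferentiableOn ℂ f (ball c R₁)) (hmaps : MapsTo f (ball c R₁) (closedBall (f c) R₂))
    (hf' : fderiv ℂ f c = 0) (hz : z ∈ ball c R₁) :
    dist (f z) (f c) ≤ R₂ * (dist z c / R₁) ^ 2 := by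
  have hderiv : HasFDerivAt f (0 : E →L[ℂ] F) c :=
    hf' ▸ (hf.differentiableAt (ball_mem_nhds c (pos_of_mem_ball hz))).hasFDerivAt
  refine Complex.dist_le_mul_div_pow_of_mapsTo_ball_of_isLittleO (n := 1) hf hmaps ?_ hz
  simpa using hderiv.isLittleO.norm_right

end CauchyEstimate

section EarleHamilton

lemma tendsto_mul_inv_one_add_pow {η : ℝ} (hη : 0 < η) (c : ℝ) :
    Tendsto (fun n : ℕ ↦ c * (1 + η)⁻¹ ^ n) atTop (𝓝 0) := by
  simpa only [mul_zero] using (tendsto_pow_atTop_nhds_zero_of_lt_one (by positivity)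
    (inv_lt_one_of_one_lt₀ (lt_add_of_pos_right 1 hη))).const_mul c

lemma exists_pos_mul_dist_lt {X : Type*} [PseudoMetricSpace X] {U : Set X} {ε : ℝ}
    (hU : Bornology.IsBounded U) (hε : 0 < ε) :
    ∃ η > 0, ∀ a ∈ U, ∀ b ∈ U, η * dist a b < ε := by
  refine ⟨ε / (diam U + 1), by positivity, fun a ha b hb ↦ ?_⟩
  rw [div_mul_eq_mul_div, div_lt_iff₀ (by positivity)]
  gcongr
  linarith [dist_le_diam_of_mem hU ha hb]

variable {E : Type*} [NormedAddCommGroup E] [NormedSpace ℂ E] {U : Set E} {F : E → E} {ε η : ℝ}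
  {x y : E}

/-- The map `F` expanded by the factor `1 + η` about its value at `y`, so that its derivative at
`y` is multiplied by `1 + η`. -/
def stretch (η : ℝ) (F : E → E) (y z : E) : E := F z + (η : ℂ) • (F z - F y)

lemma stretch_self : stretch η F y y = F y := by simp [stretch]

lemma differentiableOn_stretch (hF : DifferentiableOn ℂ F U) :
    DifferentiableOn ℂ (stretch η F y) U :=
  hF.add ((hF.sub_const _).const_smul _)

lemma fderiv_stretch_self (hF : DifferentiableAt ℂ F y) :
    fderiv ℂ (stretch η F y) y = (1 + η : ℂ) • fderiv ℂ F y := by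
  rw [add_smul, one_smul]
  exact (hF.hasFDerivAt.add ((hF.hasFDerivAt.sub_const _).const_smul _)).fderiv

lemma mapsTo_stretch (hη : 0 ≤ η) (hηU : ∀ a ∈ U, ∀ b ∈ U, η * dist a b < ε) (hε : 0 < ε)
    (hF : MapsTo F U (erosion ε U)) (hy : y ∈ U) : MapsTo (stretch η F y) U U := by
  intro z hz
  refine hF hz ?_
  have hdist : dist (stretch η F y z) (F z) = η * dist (F z) (F y) := by
    simp [stretch, dist_eq_norm, norm_smul, abs_of_nonneg hη]
  exact mem_ball.2 (hdist ▸ hηU _ (erosion_subset hε (hF hz)) _ (erosion_subset hε (hF hy)))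

lemma exists_mapsTo_fderiv_eq_smul_fderiv_iterate (hU : IsOpen U) (hη : 0 ≤ η)
    (hηU : ∀ a ∈ U, ∀ b ∈ U, η * dist a b < ε) (hε : 0 < ε) (hF : DifferentiableOn ℂ F U)
    (hFU : MapsTo F U (erosion ε U)) (hx : x ∈ U) (n : ℕ) :
    ∃ G : E → E, DifferentiableOn ℂ G U ∧ MapsTo G U U ∧ G x = F^[n] x ∧
      fderiv ℂ G x = (1 + η : ℂ) ^ n • fderiv ℂ F^[n] x := by
  have hFU' : MapsTo F U U := hFU.mono_right (erosion_subset hε)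
  induction n with
  | zero => exact ⟨id, differentiableOn_id, mapsTo_id U, rfl, by simp⟩
  | succ n ih =>
    obtain ⟨G, hG, hGU, hGx, hG'⟩ := ih
    have hnx : F^[n] x ∈ U := hFU'.iterate n hx
    have hdiff {f : E → E} {z : E} (hf : DifferentiableOn ℂ f U) (hz : z ∈ U) :
        DifferentiableAt ℂ f z := hf.differentiableAt (hU.mem_nhds hz)
    have hFn : DifferentiableAt ℂ F^[n] x := hdiff (hF.iterate hFU' n) hx
    refine ⟨stretch η F (F^[n] x) ∘ G, (differentiableOn_stretch hF).comp hG hGU,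
      (mapsTo_stretch hη hηU hε hFU hnx).comp hGU, ?_, ?_⟩
    · rw [comp_apply, hGx, stretch_self, iterate_succ_apply']
    · rw [fderiv_comp x (hdiff (differentiableOn_stretch hF) (hGU hx)) (hdiff hG hx), hGx, hG',
        fderiv_stretch_self (hdiff hF hnx), iterate_succ', fderiv_comp x (hdiff hF hnx) hFn]
      simp only [ContinuousLinearMap.smul_comp, ContinuousLinearMap.comp_smul, smul_smul, pow_succ]

lemma norm_fderiv_iterate_le (hU : IsOpen U) (hη : 0 < η)
    (hηU : ∀ a ∈ U, ∀ b ∈ U, η * dist a b < ε) (hε : 0 < ε) (hF : DifferentiableOn ℂ F U)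
    (hFU : MapsTo F U (erosion ε U)) (hx : x ∈ erosion ε U) (n : ℕ) :
    ‖fderiv ℂ F^[n] x‖ ≤ η⁻¹ * (1 + η)⁻¹ ^ n := by
  have hxU : x ∈ U := erosion_subset hε hx
  obtain ⟨G, hG, hGU, -, hG'⟩ :=
    exists_mapsTo_fderiv_eq_smul_fderiv_iterate hU hη.le hηU hε hF hFU hxU n
  have hcauchy : ‖fderiv ℂ G x‖ ≤ ε / η / ε :=
    norm_fderiv_le_div_of_mem_erosion hε hG hx fun y hy ↦
      (le_div_iff₀' hη).2 (hηU _ (hGU hy) _ (hGU hxU)).le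
  have hnorm : ‖(1 + η : ℂ)‖ = 1 + η := by
    rw [← Complex.ofReal_one, ← Complex.ofReal_add, Complex.norm_of_nonneg (by positivity)]
  rw [hG', norm_smul, norm_pow, hnorm] at hcauchy
  calc ‖fderiv ℂ F^[n] x‖ ≤ ε / η / ε / (1 + η) ^ n := (le_div_iff₀' (by positivity)).2 hcauchy
    _ = η⁻¹ * (1 + η)⁻¹ ^ n := by rw [div_div_cancel_left' hε.ne', inv_pow, div_eq_mul_inv]

lemma dist_iterate_le (hU : IsOpen U) (hUc : Convex ℝ U) (hη : 0 < η)
    (hηU : ∀ a ∈ U, ∀ b ∈ U, η * dist a b < ε) (hε : 0 < ε) (hF : DifferentiableOn ℂ F U)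
    (hFU : MapsTo F U (erosion ε U)) (hx : x ∈ erosion ε U) (hy : y ∈ erosion ε U) (n : ℕ) :
    dist (F^[n] x) (F^[n] y) ≤ η⁻¹ * (1 + η)⁻¹ ^ n * dist x y := by
  have hFU' : MapsTo F U U := hFU.mono_right (erosion_subset hε)
  rw [dist_eq_norm, dist_eq_norm]
  exact (convex_erosion hUc).norm_image_sub_le_of_norm_fderiv_le (𝕜 := ℂ)
    (fun z hz ↦ (hF.iterate hFU' n).differentiableAt (hU.mem_nhds (erosion_subset hε hz)))
    (fun z hz ↦ norm_fderiv_iterate_le hU hη hηU hε hF hFU hz n) hy hx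

/-- The Earle–Hamilton fixed point theorem on a bounded convex domain. -/
theorem existsUnique_isFixedPt_of_mapsTo_erosion [CompleteSpace E] (hU : IsOpen U)
    (hUc : Convex ℝ U) (hUb : Bornology.IsBounded U) (hUne : U.Nonempty) (hε : 0 < ε)
    (hF : DifferentiableOn ℂ F U) (hFU : MapsTo F U (erosion ε U)) :
    ∃! x, x ∈ U ∧ IsFixedPt F x := by
  obtain ⟨η, hη, hηU⟩ := exists_pos_mul_dist_lt hUb hε
  obtain ⟨x₀, hx₀⟩ := hUne
  have hT : MapsTo F (erosion ε U) (erosion ε U) := hFU.mono_left (erosion_subset hε)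
  have : Nonempty (erosion ε U) := ⟨⟨F x₀, hFU hx₀⟩⟩
  have : CompleteSpace (erosion ε U) := isClosed_erosion.completeSpace_coe
  obtain ⟨n, hn⟩ := ((tendsto_mul_inv_one_add_pow hη η⁻¹).eventually_lt_const one_pos).exists
  have hcontr : ContractingWith ⟨η⁻¹ * (1 + η)⁻¹ ^ n, by positivity⟩ (hT.restrict F _ _)^[n] := by
    refine ⟨hn, LipschitzWith.of_dist_le_mul fun a b ↦ ?_⟩
    rw [hT.iterate_restrict, Subtype.dist_eq]
    exact dist_iterate_le hU hUc hη hηU hε hF hFU a.2 b.2 n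
  refine ⟨_, ⟨erosion_subset hε (hcontr.fixedPoint _).2,
    congrArg Subtype.val hcontr.isFixedPt_fixedPoint_iterate⟩, fun y ⟨hy, hFy⟩ ↦ ?_⟩
  have hy' : IsFixedPt (hT.restrict F _ _) ⟨y, hFy ▸ hFU hy⟩ := Subtype.ext hFy
  exact congrArg Subtype.val (hcontr.fixedPoint_unique (hy'.iterate n))

variable {W : Type*} [NormedAddCommGroup W] [NormedSpace ℂ W] {Ω : Set W} {Φ : W → E → E}

lemma differentiableOn_iterate_apply (hΦ : DifferentiableOn ℂ (uncurry Φ) (Ω ×ˢ U))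
    (hΦU : ∀ w ∈ Ω, MapsTo (Φ w) U U) (hx : x ∈ U) (n : ℕ) :
    DifferentiableOn ℂ (fun w ↦ (Φ w)^[n] x) Ω := by
  induction n with
  | zero => exact differentiableOn_const x
  | succ n ih =>
    simp only [iterate_succ_apply']
    exact hΦ.comp (differentiableOn_id.prodMk ih) fun w hw ↦ ⟨hw, (hΦU w hw).iterate n hx⟩

theorem exists_differentiableOn_isFixedPt [CompleteSpace E] (hΩ : IsOpen Ω) (hU : IsOpen U)
    (hUc : Convex ℝ U) (hUb : Bornology.IsBounded U) (hUne : U.Nonempty) (hε : 0 < ε)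
    (hΦ : DifferentiableOn ℂ (uncurry Φ) (Ω ×ˢ U)) (hΦU : ∀ w ∈ Ω, MapsTo (Φ w) U (erosion ε U)) :
    ∃ ζ : W → E, DifferentiableOn ℂ ζ Ω ∧
      ∀ w ∈ Ω, ζ w ∈ U ∧ IsFixedPt (Φ w) (ζ w) ∧ ∀ z ∈ U, IsFixedPt (Φ w) z → z = ζ w := by
  have hΦw (w) (hw : w ∈ Ω) : DifferentiableOn ℂ (Φ w) U :=
    hΦ.comp (by fun_prop : DifferentiableOn ℂ (fun z ↦ (w, z)) U) fun z hz ↦ ⟨hw, hz⟩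
  choose! ζ hζ hζ_unique using fun w (hw : w ∈ Ω) ↦
    existsUnique_isFixedPt_of_mapsTo_erosion hU hUc hUb hUne hε (hΦw w hw) (hΦU w hw)
  refine ⟨ζ, ?_, fun w hw ↦ ⟨(hζ w hw).1, (hζ w hw).2, fun z hz hfix ↦ hζ_unique w hw z ⟨hz, hfix⟩⟩⟩
  obtain ⟨η, hη, hηU⟩ := exists_pos_mul_dist_lt hUb hε
  obtain ⟨x₀, hx₀⟩ := hUne
  have hΦU' (w) (hw : w ∈ Ω) : MapsTo (Φ w) U U := (hΦU w hw).mono_right (erosion_subset hε)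
  have hrate (n : ℕ) (w) (hw : w ∈ Ω) :
      dist (ζ w) ((Φ w)^[n + 1] x₀) ≤ η⁻¹ * (ε / η) * (1 + η)⁻¹ ^ n := by
    obtain ⟨hζU, hfix⟩ := hζ w hw
    have hdist : dist (ζ w) (Φ w x₀) ≤ ε / η :=
      (le_div_iff₀' hη).2 (hηU _ hζU _ (hΦU' w hw hx₀)).le
    calc dist (ζ w) ((Φ w)^[n + 1] x₀)
        = dist ((Φ w)^[n] (ζ w)) ((Φ w)^[n] (Φ w x₀)) := by
          rw [hfix.iterate n, iterate_succ_apply]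
      _ ≤ η⁻¹ * (1 + η)⁻¹ ^ n * dist (ζ w) (Φ w x₀) :=
          dist_iterate_le hU hUc hη hηU hε (hΦw w hw) (hΦU w hw) (hfix ▸ hΦU w hw hζU)
            (hΦU w hw hx₀) n
      _ ≤ η⁻¹ * (1 + η)⁻¹ ^ n * (ε / η) := by gcongr
      _ = η⁻¹ * (ε / η) * (1 + η)⁻¹ ^ n := by ring
  refine differentiableOn_of_tendstoUniformlyOn (φ := atTop) hΩ
    (fun n ↦ differentiableOn_iterate_apply hΦ hΦU' hx₀ (n + 1)) ?_
  refine Metric.tendstoUniformlyOn_iff.2 fun c hc ↦ ?_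
  filter_upwards [(tendsto_mul_inv_one_add_pow hη _).eventually_lt_const hc] with n hn w hw
  exact (hrate n w hw).trans_lt hn

end EarleHamilton

section SlowManifold

lemma mul_lt_min_of_lt_div_sq {K C σ κ δ : ℝ} (hσ : 0 < σ) (hK : 0 < K) (hC : 0 < C)
    (hκ : 0 < κ) (hκσ : κ ≤ σ - K * δ) (hδ : δ < κ ^ 2 / (K ^ 2 * C)) :
    K * δ < min σ (σ ^ 2 / (K * C)) := by
  refine lt_min (by linarith) ?_
  rcases lt_or_ge δ 0 with hneg | hpos
  · exact (mul_neg_of_pos_of_neg hK hneg).trans (by positivity)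
  · have hκσ' : κ ≤ σ := by linarith [mul_nonneg hK.le hpos]
    calc K * δ < K * (κ ^ 2 / (K ^ 2 * C)) := by gcongr
      _ = κ ^ 2 / (K * C) := by field_simp
      _ ≤ σ ^ 2 / (K * C) := by gcongr

variable {𝒲 𝒵 𝒴 : Type*} [NormedAddCommGroup 𝒲] [NormedSpace ℂ 𝒲] [NormedAddCommGroup 𝒵]
  [NormedSpace ℂ 𝒵] [NormedAddCommGroup 𝒴] [NormedSpace ℂ 𝒴]

lemma add_map_add_eq_zero_iff {A : 𝒵 →L[ℂ] 𝒴} {Ainv : 𝒴 →L[ℂ] 𝒵}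
    (hright : A.comp Ainv = .id ℂ 𝒴) (hleft : Ainv.comp A = .id ℂ 𝒵) {a b : 𝒴} {z : 𝒵} :
    a + A z + b = 0 ↔ -Ainv (a + b) = z := by
  have hA (y) : A (Ainv y) = y := DFunLike.congr_fun hright y
  have hAinv (z) : Ainv (A z) = z := DFunLike.congr_fun hleft z
  rw [add_right_comm, add_eq_zero_iff_eq_neg]
  constructor
  · intro h
    rw [h, map_neg, hAinv, neg_neg]
  · rintro rfl
    rw [map_neg, hA, neg_neg]

lemma norm_inverse_apply_le_half {K C σ τ : ℝ} {B : 𝒴 →L[ℂ] 𝒵} {f : 𝒵 → 𝒴} {z : 𝒵}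
    (hB : ‖B‖ ≤ K / 2) (hτσ : τ ≤ σ) (hKC : K * C * τ ≤ σ ^ 2)
    (hf : DifferentiableOn ℂ f (ball 0 σ)) (hf0 : f 0 = 0) (hf' : fderiv ℂ f 0 = 0)
    (hfC : ∀ z ∈ ball (0 : 𝒵) σ, ‖f z‖ ≤ C) (hz : z ∈ ball (0 : 𝒵) τ) :
    ‖B (f z)‖ ≤ ‖z‖ / 2 := by
  have hσ : 0 < σ := (pos_of_mem_ball hz).trans_le hτσ
  have hK : 0 ≤ K := by linarith [norm_nonneg B]
  have hC : 0 ≤ C := (norm_nonneg _).trans (hfC z (ball_subset_ball hτσ hz))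
  have hzτ : ‖z‖ ≤ τ := (mem_ball_zero_iff.1 hz).le
  have hschwarz : ‖f z‖ ≤ C * (‖z‖ / σ) ^ 2 := by
    simpa [hf0] using dist_le_mul_div_sq_of_fderiv_eq_zero hf
      (fun y hy ↦ by simpa [hf0] using hfC y hy) hf' (ball_subset_ball hτσ hz)
  calc ‖B (f z)‖ ≤ K / 2 * (C * (‖z‖ / σ) ^ 2) := B.le_of_opNorm_le_of_le hB hschwarz
    _ = K * C * ‖z‖ / σ ^ 2 * (‖z‖ / 2) := by ring
    _ ≤ K * C * τ / σ ^ 2 * (‖z‖ / 2) := by gcongr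
    _ ≤ 1 * (‖z‖ / 2) := by gcongr; exact div_le_one_of_le₀ hKC (by positivity)
    _ = ‖z‖ / 2 := one_mul _

lemma mapsTo_erosion_ball_of_norm_le_half {K δ τ : ℝ} {B : 𝒴 →L[ℂ] 𝒵} {a : 𝒴} {f : 𝒵 → 𝒴}
    (hB : ‖B‖ ≤ K / 2) (ha : ‖a‖ ≤ δ) (hf : ∀ z ∈ ball (0 : 𝒵) τ, ‖B (f z)‖ ≤ ‖z‖ / 2) :
    MapsTo (fun z ↦ -B (a + f z)) (ball 0 τ) (erosion ((τ - K * δ) / 2) (ball 0 τ)) := by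
  intro z hz
  have hBa : ‖B a‖ ≤ K / 2 * δ := B.le_of_opNorm_le_of_le hB ha
  have hnorm : ‖-B (a + f z)‖ ≤ (τ + K * δ) / 2 := by
    rw [norm_neg, map_add]
    linarith [norm_add_le (B a) (B (f z)), hf z hz, mem_ball_zero_iff.1 hz]
  have hsum : (τ + K * δ) / 2 + (τ - K * δ) / 2 = τ := by ring
  simpa only [hsum] using
    closedBall_subset_erosion_ball (s := (τ - K * δ) / 2) (mem_closedBall_zero_iff.2 hnorm)

lemma norm_le_and_norm_sub_le_of_isFixedPt {K : ℝ} {B : 𝒴 →L[ℂ] 𝒵} {a : 𝒴} {f : 𝒵 → 𝒴} {z : 𝒵}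
    (hB : ‖B‖ ≤ K / 2) (hf : ‖B (f z)‖ ≤ ‖z‖ / 2) (hz : IsFixedPt (fun z ↦ -B (a + f z)) z) :
    ‖z‖ ≤ K * ‖a‖ ∧ ‖z - -B a‖ ≤ K / 2 * ‖a‖ := by
  have hBa : ‖B a‖ ≤ K / 2 * ‖a‖ := B.le_of_opNorm_le hB a
  have hsub : ‖z - -B a‖ = ‖B (f z)‖ := by
    conv_lhs => rw [← hz.eq]
    simp only [map_add, neg_add_rev, add_sub_cancel_right, norm_neg]
  have hnorm : ‖z‖ ≤ ‖B a‖ + ‖z - -B a‖ := by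
    simpa only [norm_neg] using norm_le_norm_add_norm_sub' z (-B a)
  constructor <;> linarith

theorem slow_manifold_implicit_function_general [CompleteSpace 𝒵] {Ω : Set 𝒲} (hΩ : IsOpen Ω)
    {σ τ K C δ : ℝ} (hτ : 0 < τ) (hτσ : τ ≤ σ) (hKC : K * C * τ ≤ σ ^ 2) (hKδ : K * δ < τ)
    {A : 𝒲 → 𝒵 →L[ℂ] 𝒴} {Ainv : 𝒲 → 𝒴 →L[ℂ] 𝒵}
    (hA_inv : ∀ w ∈ Ω, (A w).comp (Ainv w) = .id ℂ 𝒴 ∧ (Ainv w).comp (A w) = .id ℂ 𝒵)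
    (hAinv : DifferentiableOn ℂ Ainv Ω) (hAinv_le : ∀ w ∈ Ω, ‖Ainv w‖ ≤ K / 2)
    {ρ : 𝒲 → 𝒴} (hρ : DifferentiableOn ℂ ρ Ω) (hρ_le : ∀ w ∈ Ω, ‖ρ w‖ ≤ δ)
    {R : 𝒲 → 𝒵 → 𝒴} (hR : DifferentiableOn ℂ (uncurry R) (Ω ×ˢ ball 0 σ))
    (hR0 : ∀ w ∈ Ω, R w 0 = 0) (hR' : ∀ w ∈ Ω, fderiv ℂ (R w) 0 = 0)
    (hR_le : ∀ w ∈ Ω, ∀ z ∈ ball (0 : 𝒵) σ, ‖R w z‖ ≤ C) :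
    ∃ ζ : 𝒲 → 𝒵, DifferentiableOn ℂ ζ Ω ∧ ∀ w ∈ Ω,
      ρ w + A w (ζ w) + R w (ζ w) = 0 ∧ ‖ζ w‖ ≤ K * ‖ρ w‖ ∧
      ‖ζ w - -Ainv w (ρ w)‖ ≤ K / 2 * ‖ρ w‖ ∧
      ∀ z ∈ ball (0 : 𝒵) τ, ρ w + A w z + R w z = 0 → z = ζ w := by
  have hnonlin (w) (hw : w ∈ Ω) (z) (hz : z ∈ ball (0 : 𝒵) τ) : ‖Ainv w (R w z)‖ ≤ ‖z‖ / 2 :=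
    norm_inverse_apply_le_half (hAinv_le w hw) hτσ hKC
      (hR.comp (by fun_prop : DifferentiableOn ℂ (fun z ↦ (w, z)) _) fun z hz ↦ ⟨hw, hz⟩)
      (hR0 w hw) (hR' w hw) (hR_le w hw) hz
  have hΦ : DifferentiableOn ℂ (uncurry fun w z ↦ -Ainv w (ρ w + R w z)) (Ω ×ˢ ball 0 τ) :=
    ((hAinv.comp differentiableOn_fst fun p hp ↦ hp.1).clm_apply
      ((hρ.comp differentiableOn_fst fun p hp ↦ hp.1).add
        (hR.mono (prod_mono_right (ball_subset_ball hτσ))))).neg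
  obtain ⟨ζ, hζ, hζ_fix⟩ := exists_differentiableOn_isFixedPt hΩ isOpen_ball (convex_ball 0 τ)
    isBounded_ball (nonempty_ball.2 hτ) (half_pos (sub_pos.2 hKδ)) hΦ
    fun w hw ↦ mapsTo_erosion_ball_of_norm_le_half (hAinv_le w hw) (hρ_le w hw) (hnonlin w hw)
  refine ⟨ζ, hζ, fun w hw ↦ ?_⟩
  obtain ⟨hζτ, hfix, huniq⟩ := hζ_fix w hw
  have hiff (z) : ρ w + A w z + R w z = 0 ↔ IsFixedPt (fun z ↦ -Ainv w (ρ w + R w z)) z :=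
    add_map_add_eq_zero_iff (hA_inv w hw).1 (hA_inv w hw).2
  obtain ⟨hζ_le, hζ_center⟩ :=
    norm_le_and_norm_sub_le_of_isFixedPt (hAinv_le w hw) (hnonlin w hw _ hζτ) hfix
  exact ⟨(hiff _).2 hfix, hζ_le, hζ_center, fun z hz h ↦ huniq z hz ((hiff z).1 h)⟩

end SlowManifold

/-- **Existence, bound and local uniqueness of the improved slow manifold
(Lemma `analimpl`).**
Under (G1)-(G3)-type assumptions on `A`, `ρ`, `R` on the complex thickenings
`V+iν`, `S+iσ`, with `0 < κ ≤ σ − Kδ` and `δ < κ²K⁻²C_R⁻¹`, the equation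
`0 = ρ(w) + A(w)z + R(w,z)` has an analytic solution `z = ζ(w)` with
`‖ζ(w)‖ ≤ K‖ρ(w)‖`, unique in the closed ball of radius `(K/2)‖ρ(w)‖`
around `−A(w)⁻¹ρ(w)`. -/
theorem slow_manifold_implicit_function
    {𝒲 𝒵 : Type*} [NormedAddCommGroup 𝒲] [NormedSpace ℂ 𝒲]
    [NormedAddCommGroup 𝒵] [NormedSpace ℂ 𝒵] [CompleteSpace 𝒵]
    (V : Set 𝒲) (S : Set 𝒵) (hS0 : (0 : 𝒵) ∈ S)
    (ν σ K C_R κ δ : ℝ)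
    (hν : 0 < ν) (hσ : 0 < σ) (hK : 0 < K) (hCR : 0 < C_R)
    (A Ainv : 𝒲 → 𝒵 →L[ℂ] 𝒵)
    (hA_inv : ∀ w ∈ thickening ν V,
      (A w).comp (Ainv w) = ContinuousLinearMap.id ℂ 𝒵 ∧
      (Ainv w).comp (A w) = ContinuousLinearMap.id ℂ 𝒵)
    (hAinv_an : DifferentiableOn ℂ Ainv (thickening ν V))
    (hAinv_bdd : ∀ w ∈ thickening ν V, ‖Ainv w‖ ≤ K / 2)
    (ρ : 𝒲 → 𝒵) (hρ_an : DifferentiableOn ℂ ρ (thickening ν V))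
    (hρ_bdd : ∀ w ∈ thickening ν V, ‖ρ w‖ ≤ δ)
    (R : 𝒲 → 𝒵 → 𝒵)
    (hR_an : DifferentiableOn ℂ (fun p : 𝒲 × 𝒵 => R p.1 p.2)
      (thickening ν V ×ˢ thickening σ S))
    (hR0 : ∀ w ∈ thickening ν V, R w 0 = 0)
    (hdR0 : ∀ w ∈ thickening ν V, fderiv ℂ (R w) 0 = 0)
    (hR_bdd : ∀ w ∈ thickening ν V, ∀ z ∈ thickening σ S, ‖R w z‖ ≤ C_R)
    (hκ : 0 < κ) (hκσ : κ ≤ σ - K * δ)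
    (hδ : δ < κ ^ 2 / (K ^ 2 * C_R)) :
    ∃ ζ : 𝒲 → 𝒵, DifferentiableOn ℂ ζ (thickening ν V) ∧
      ∀ w ∈ thickening ν V,
        ρ w + A w (ζ w) + R w (ζ w) = 0 ∧
        ‖ζ w‖ ≤ K * ‖ρ w‖ ∧
        ‖ζ w - (-(Ainv w (ρ w)))‖ ≤ K / 2 * ‖ρ w‖ ∧
        ∀ z : 𝒵, ‖z - (-(Ainv w (ρ w)))‖ ≤ K / 2 * ‖ρ w‖ →
          ρ w + A w z + R w z = 0 → z = ζ w := by
  have hKCR : 0 < K * C_R := mul_pos hK hCR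
  have hKδ : K * δ < min σ (σ ^ 2 / (K * C_R)) := mul_lt_min_of_lt_div_sq hσ hK hCR hκ hκσ hδ
  have hball : ball 0 σ ⊆ thickening σ S := ball_subset_thickening hS0 σ
  obtain ⟨ζ, hζ, hζ_spec⟩ := slow_manifold_implicit_function_general isOpen_thickening
    (lt_min hσ (by positivity)) (min_le_left σ _)
    ((le_div_iff₀' hKCR).1 (min_le_right σ _)) hKδ hA_inv hAinv_an hAinv_bdd hρ_an hρ_bdd
    (hR_an.mono (prod_mono_right hball)) hR0 hdR0 fun w hw z hz ↦ hR_bdd w hw z (hball hz)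
  refine ⟨ζ, hζ, fun w hw ↦ ?_⟩
  obtain ⟨heq, hle, hcenter, huniq⟩ := hζ_spec w hw
  refine ⟨heq, hle, hcenter, fun z hz ↦ huniq z (mem_ball_zero_iff.2 ?_)⟩
  have hlin := (Ainv w).le_of_opNorm_le (hAinv_bdd w hw) (ρ w)
  have hz_le := norm_le_norm_add_norm_sub' z (-Ainv w (ρ w))
  have hKρ : K * ‖ρ w‖ ≤ K * δ := by gcongr; exact hρ_bdd w hw
  rw [norm_neg] at hz_le
  linarith
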